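/- Under the same setup as the discounted OCP algorithm A_CP (with hyperparameter ε > 0, discount factors λ_t ∈ (0,∞), erfi-based predictions r_t, clipped gradients g*_{t,clip}, and internal statistics S*_{t,clip}, V*_{t,clip}, G*_t as defined by the algorithm), and assuming the optimal radii satisfy r*_t ≤ D for all t for some D > 0 unknown to the algorithm, the following discounted coverage bound holds for all T ∈ ℕ_+: |S*_T| ≤ 2·√(V*_T)·(1 + √(log(1 + 2D·ε^{-1}))) + 15·G*_T·(1 + √(log(1 + 2D·ε^{-1})))², where S*_T := −Σ_{i=1}^T (∏_{j=i}^{T-1} λ_j)·g*_i and V*_T := Σ_{i=1}^T (∏_{j=i}^{T-1} λ_j²)·(g*_i)². -/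

import Mathlib

open scoped BigOperators

/-- The (rescaled) imaginary error function `erfi(x) = ∫₀ˣ exp(u²) du`. -/
noncomputable def erfi (x : ℝ) : ℝ := ∫ u in (0:ℝ)..x, Real.exp (u^2)

lemma erfi_hasDerivAt (x : ℝ) : HasDerivAt erfi (Real.exp (x^2)) x := by
  have hc : Continuous (fun u : ℝ => Real.exp (u^2)) := by fun_prop
  exact (hc.integral_hasStrictDerivAt 0 x).hasDerivAt

lemma erfi_zero : erfi 0 = 0 := by simp [erfi]

lemma erfi_le (x : ℝ) (hx : 0 ≤ x) : erfi x ≤ x * Real.exp (x^2) := by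
  have hd : ∀ y : ℝ, HasDerivAt (fun y => y * Real.exp (y^2) - erfi y)
      (2 * y^2 * Real.exp (y^2)) y := by
    intro y
    have h1 : HasDerivAt (fun y : ℝ => Real.exp (y^2)) (Real.exp (y^2) * (2 * y)) y := by
      have := (hasDerivAt_pow 2 y).exp
      simpa using this
    have h2 := ((hasDerivAt_id y).mul h1).sub (erfi_hasDerivAt y)
    refine h2.congr_deriv ?_
    simp only [id]
    ring
  have hm : Monotone (fun y => y * Real.exp (y^2) - erfi y) :=
    monotone_of_hasDerivAt_nonneg hd (fun y => by positivity)
  have := hm hx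
  simp only [erfi_zero] at this
  linarith

lemma one_le_erfi_one : 1 ≤ erfi 1 := by
  have hd : ∀ y : ℝ, HasDerivAt (fun y => erfi y - y) (Real.exp (y^2) - 1) y := by
    intro y
    exact (erfi_hasDerivAt y).sub (hasDerivAt_id y)
  have hm : Monotone (fun y => erfi y - y) :=
    monotone_of_hasDerivAt_nonneg hd (fun y => by
      have : 1 ≤ Real.exp (y^2) := Real.one_le_exp (by positivity)
      simpa using this)
  have := hm (zero_le_one (α := ℝ))
  simp only [erfi_zero] at this
  linarith

lemma erfi_lower (y : ℝ) (hy : 0 ≤ y) :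
    (Real.exp (y^2) - 1) / 2 < erfi (1 + y) - Real.exp ((1+y)^2) / (4 * (1 + y)) := by
  have hd : ∀ y : ℝ, 0 ≤ y → HasDerivAt
      (fun y => erfi (1 + y) - Real.exp ((1+y)^2) / (4 * (1 + y)) - (Real.exp (y^2) - 1) / 2)
      (Real.exp ((1+y)^2) * (1/2 + 1 / (4 * (1+y)^2)) - y * Real.exp (y^2)) y := by
    intro y hy
    have h1 : HasDerivAt (fun y : ℝ => Real.exp (y^2)) (Real.exp (y^2) * (2 * y)) y := by
      have := (hasDerivAt_pow 2 y).exp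
      simpa using this
    have h0 : HasDerivAt (fun y : ℝ => 1 + y) 1 y := (hasDerivAt_id y).const_add 1
    have h2 : HasDerivAt (fun y : ℝ => Real.exp ((1+y)^2))
        (Real.exp ((1+y)^2) * (2 * (1+y))) y := by
      have := (h0.pow 2).exp
      simpa using this
    have h3 : HasDerivAt (fun y : ℝ => erfi (1 + y)) (Real.exp ((1+y)^2)) y := by
      have := (erfi_hasDerivAt (1+y)).comp y h0
      rw [mul_one] at this
      exact this
    have hne : 4 * (1 + y) ≠ 0 := by positivity
    have h4 := (h3.sub (h2.div (h0.const_mul 4) hne)).sub ((h1.sub_const 1).div_const 2)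
    refine h4.congr_deriv ?_
    have : 1 + y ≠ 0 := by positivity
    field_simp
    ring
  have hm : MonotoneOn
      (fun y => erfi (1 + y) - Real.exp ((1+y)^2) / (4 * (1 + y)) - (Real.exp (y^2) - 1) / 2)
      (Set.Ici 0) := by
    apply monotoneOn_of_deriv_nonneg (convex_Ici 0)
    · intro y hy
      exact (hd y hy).continuousAt.continuousWithinAt
    · intro y hy
      rw [interior_Ici] at hy
      exact (hd y (le_of_lt hy)).differentiableAt.differentiableWithinAt
    · intro y hy
      rw [interior_Ici] at hy
      have hy0 : 0 < y := hy
      rw [(hd y hy0.le).deriv]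
      have e1 : Real.exp ((1+y)^2) = Real.exp (y^2) * Real.exp (1 + 2*y) := by
        rw [← Real.exp_add]; ring_nf
      have e2 : 2 * y ≤ Real.exp (1 + 2*y) := by
        have := Real.add_one_le_exp (1 + 2*y)
        linarith
      have e3 := Real.exp_pos (y^2)
      have e4 : Real.exp (y^2) * (2*y) ≤ Real.exp ((1+y)^2) := by
        rw [e1]; exact mul_le_mul_of_nonneg_left e2 e3.le
      have e5 : 0 ≤ Real.exp ((1+y)^2) * (1 / (4 * (1+y)^2)) := by positivity
      nlinarith
  have := hm (Set.mem_Ici.2 le_rfl) (Set.mem_Ici.2 hy) hy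
  simp only [add_zero] at this
  norm_num at this
  have h1 := one_le_erfi_one
  have h2 := Real.exp_one_lt_d9
  linarith

/-- If the statistic is large then the prediction exceeds `D`. -/
lemma pred_large (eps D S V G L : ℝ) (heps : 0 < eps) (hD : 0 < D) (hG : 0 < G) (hS : 0 ≤ S)
    (hV : 0 ≤ V) (hL : L = 1 + Real.sqrt (Real.log (1 + 2 * D * eps⁻¹)))
    (hx : L < S / (2 * Real.sqrt (V + 2 * G * S + 16 * G^2))) :
    D < eps * erfi (S / (2 * Real.sqrt (V + 2 * G * S + 16 * G^2)))
        - eps * G / Real.sqrt (V + 2 * G * S + 16 * G^2)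
          * Real.exp (S^2 / (4 * (V + 2 * G * S + 16 * G^2))) := by
  set Q := V + 2 * G * S + 16 * G^2 with hQ
  have hQ0 : 0 < Q := by positivity
  obtain ⟨q, hq0, hqQ, hqs⟩ : ∃ q, 0 < q ∧ q^2 = Q ∧ Real.sqrt Q = q :=
    ⟨_, Real.sqrt_pos.2 hQ0, Real.sq_sqrt hQ0.le, rfl⟩
  rw [hqs] at hx ⊢
  rw [← hqQ] at hQ
  rw [← hqQ]
  set l := Real.sqrt (Real.log (1 + 2 * D * eps⁻¹)) with hl
  have hl0 : 0 ≤ l := Real.sqrt_nonneg _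
  obtain ⟨y, hy⟩ : ∃ y, S / (2 * q) = 1 + y := ⟨S / (2*q) - 1, by ring⟩
  have hly : l ≤ y := by linarith
  have hy0 : 0 ≤ y := hl0.trans hly
  have hSy : S = (1 + y) * (2 * q) := by
    rw [← hy]; field_simp
  have hexp : S^2 / (4 * q^2) = (1+y)^2 := by
    rw [hSy]; field_simp; ring
  rw [hexp, hy]
  have key := erfi_lower y hy0
  have hle : 1 + 2 * D * eps⁻¹ ≤ Real.exp (y^2) := by
    have hpos : 0 < 2 * D * eps⁻¹ := by positivity
    have : Real.log (1 + 2 * D * eps⁻¹) = l^2 := by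
      rw [hl, Real.sq_sqrt (Real.log_nonneg (by linarith))]
    rw [← Real.log_le_iff_le_exp (by linarith), this]
    gcongr
  have hGq : G / q ≤ 1 / (4 * (1 + y)) := by
    rw [div_le_div_iff₀ hq0 (by positivity)]
    have : 4 * G * (1+y) * q ≤ q * q := by
      rw [hSy] at hQ
      nlinarith [sq_nonneg G]
    nlinarith
  have h1 : G / q * Real.exp ((1+y)^2) ≤ Real.exp ((1+y)^2) / (4 * (1+y)) := by
    have := mul_le_mul_of_nonneg_right hGq (Real.exp_pos ((1+y)^2)).le
    calc _ ≤ _ := this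
      _ = _ := by ring
  have h2 : D * eps⁻¹ < erfi (1+y) - G / q * Real.exp ((1+y)^2) := by linarith
  have h3 := mul_lt_mul_of_pos_left h2 heps
  have h4 : eps * (D * eps⁻¹) = D := by field_simp
  rw [h4] at h3
  calc D < _ := h3
    _ = _ := by ring

/-- If the statistic is small then the prediction is nonpositive. -/
lemma pred_small (eps S V G : ℝ) (heps : 0 < eps) (hG : 0 < G) (hS : 0 ≤ S)
    (hV : 0 ≤ V) (hx : S ≤ 2 * G) :
    eps * erfi (S / (2 * Real.sqrt (V + 2 * G * S + 16 * G^2)))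
        - eps * G / Real.sqrt (V + 2 * G * S + 16 * G^2)
          * Real.exp (S^2 / (4 * (V + 2 * G * S + 16 * G^2))) ≤ 0 := by
  set Q := V + 2 * G * S + 16 * G^2 with hQ
  have hQ0 : 0 < Q := by positivity
  obtain ⟨q, hq0, hqQ, hqs⟩ : ∃ q, 0 < q ∧ q^2 = Q ∧ Real.sqrt Q = q :=
    ⟨_, Real.sqrt_pos.2 hQ0, Real.sq_sqrt hQ0.le, rfl⟩
  rw [hqs, ← hqQ]
  have h1 := erfi_le (S / (2*q)) (by positivity)
  have h2 : S^2 / (4 * q^2) = (S / (2*q))^2 := by field_simp; ring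
  rw [h2]
  have h3 : S / (2*q) ≤ G / q := by
    rw [div_le_div_iff₀ (by positivity) hq0]; nlinarith
  have h4 := mul_le_mul_of_nonneg_right h3 (Real.exp_pos ((S / (2*q))^2)).le
  have h5 := mul_le_mul_of_nonneg_left (h1.trans h4) heps.le
  calc _ = eps * erfi (S / (2*q)) - eps * (G / q * Real.exp ((S / (2*q))^2)) := by ring
    _ ≤ 0 := by linarith

lemma quad_bound (S V G L : ℝ) (hS : 0 ≤ S) (hV : 0 ≤ V) (hG : 0 < G) (hL : 1 ≤ L)
    (hx : S / (2 * Real.sqrt (V + 2 * G * S + 16 * G^2)) ≤ L) :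
    S ≤ 2 * Real.sqrt V * L + 13 * G * L^2 := by
  have hQ0 : 0 < V + 2 * G * S + 16 * G^2 := by positivity
  have hq0 := Real.sqrt_pos.2 hQ0
  have hq2 := Real.sq_sqrt hQ0.le
  set q := Real.sqrt (V + 2 * G * S + 16 * G^2)
  rw [div_le_iff₀ (by positivity)] at hx
  have hv0 := Real.sqrt_nonneg V
  have hv2 := Real.sq_sqrt hV
  set v := Real.sqrt V
  have hsq : S^2 ≤ 4 * L^2 * (v^2 + 2 * G * S + 16 * G^2) := by
    rw [hv2, ← hq2]
    calc S^2 ≤ (L * (2*q))^2 := by gcongr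
      _ = _ := by ring
  by_contra hcon
  push Not at hcon
  have hL0 : 0 < L := by linarith
  have hb : 0 < 2 * v * L + 5 * G * L^2 := by positivity
  have hp : (2 * v * L + 13 * G * L^2) * (2 * v * L + 5 * G * L^2) < S * (S - 8 * G * L^2) := by
    apply mul_lt_mul'' hcon (by linarith) (by positivity) hb.le
  have h1 : 0 ≤ v * L * G * L^2 := by positivity
  have h2 : L^2 ≤ L^4 := by gcongr <;> norm_num
  have h3 : G^2 * L^2 ≤ G^2 * L^4 := by gcongr
  have h4 : 0 < G^2 * L^2 := by positivity
  nlinarith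

/-- Discounted coverage bound of `A_CP` with unclipped variance: if the optimal
radii are bounded by `D` (unknown to the algorithm), then for all `T ≥ 1`,
`|S*_T| ≤ 2√(V*_T)(1+√log(1+2D/ε)) + 15·G*_T·(1+√log(1+2D/ε))²`. -/
theorem ocp_coverage_bound_main
    (eps : ℝ) (heps : 0 < eps)
    (lam : ℕ → ℝ) (hlam : ∀ t, 0 < lam t) (hlam0 : lam 0 = 1)
    (f : ℕ → ℝ → ℝ) (rstar : ℕ → ℝ)
    (Sc Vc Gs rt r gs gclip : ℕ → ℝ)
    (hSc0 : Sc 0 = 0) (hVc0 : Vc 0 = 0) (hGs0 : Gs 0 = 0)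
    (hrt : ∀ t, 1 ≤ t →
      (Gs (t-1) = 0 → rt t = 0) ∧
      (Gs (t-1) ≠ 0 → rt t =
        eps * erfi (Sc (t-1) /
          (2 * Real.sqrt (Vc (t-1) + 2 * Gs (t-1) * Sc (t-1) + 16 * (Gs (t-1))^2)))
        - eps * Gs (t-1) / Real.sqrt (Vc (t-1) + 2 * Gs (t-1) * Sc (t-1) + 16 * (Gs (t-1))^2)
          * Real.exp ((Sc (t-1))^2 /
            (4 * (Vc (t-1) + 2 * Gs (t-1) * Sc (t-1) + 16 * (Gs (t-1))^2)))))
    (hr : ∀ t, 1 ≤ t → r t = max (rt t) 0)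
    (hfconv : ∀ t, ConvexOn ℝ (Set.Ici 0) (f t))
    (hrstar : ∀ t, 0 ≤ rstar t)
    (hmin : ∀ t, ∀ y ∈ Set.Ici (0:ℝ), f t (rstar t) ≤ f t y)
    (hsub : ∀ t, 1 ≤ t → ∀ y ∈ Set.Ici (0:ℝ), f t (r t) + gs t * (y - r t) ≤ f t y)
    (hneg : ∀ t, 1 ≤ t → r t = rstar t → gs t ≤ 0)
    (hclip : ∀ t, 1 ≤ t →
      gclip t = max (-(lam (t-1) * Gs (t-1))) (min (gs t) (lam (t-1) * Gs (t-1))))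
    (hScrec : ∀ t, 1 ≤ t → Sc t = lam (t-1) * Sc (t-1) - gclip t)
    (hVcrec : ∀ t, 1 ≤ t → Vc t = (lam (t-1))^2 * Vc (t-1) + (gclip t)^2)
    (hGsrec : ∀ t, 1 ≤ t → Gs t = max (lam (t-1) * Gs (t-1)) |gs t|)
    (Sstar : ℕ → ℝ)
    (hSstar : ∀ t, Sstar t = -∑ i ∈ Finset.Icc 1 t, (∏ j ∈ Finset.Icc i (t-1), lam j) * gs i)
    (D : ℝ) (hD : 0 < D) (hrstarD : ∀ t, rstar t ≤ D)
    (Vstar : ℕ → ℝ)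
    (hVstar : ∀ t, Vstar t =
      ∑ i ∈ Finset.Icc 1 t, (∏ j ∈ Finset.Icc i (t-1), (lam j)^2) * (gs i)^2) :
    ∀ T, 1 ≤ T →
      |Sstar T| ≤ 2 * Real.sqrt (Vstar T)
          * (1 + Real.sqrt (Real.log (1 + 2 * D * eps⁻¹)))
        + 15 * Gs T * (1 + Real.sqrt (Real.log (1 + 2 * D * eps⁻¹)))^2 := by
  have hG : ∀ t, 0 ≤ Gs t := by
    intro t
    rcases t with _ | t
    · rw [hGs0]
    · rw [hGsrec (t+1) (by omega)]
      exact le_max_of_le_right (abs_nonneg _)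
  have hlog : 0 ≤ Real.sqrt (Real.log (1 + 2 * D * eps⁻¹)) := Real.sqrt_nonneg _
  obtain ⟨L, hL⟩ : ∃ L, L = 1 + Real.sqrt (Real.log (1 + 2 * D * eps⁻¹)) := ⟨_, rfl⟩
  rw [← hL]
  have hL1 : 1 ≤ L := by linarith
  -- signs of the subgradients
  have hsgn : ∀ t, 1 ≤ t → gs t * (rstar t - r t) ≤ 0 := by
    intro t ht
    have hr0 : 0 ≤ r t := by rw [hr t ht]; exact le_max_right _ _
    have h1 := hsub t ht (rstar t) (hrstar t)
    have h2 := hmin t (r t) hr0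
    linarith
  have hgneg : ∀ t, 1 ≤ t → rt t ≤ 0 → gs t ≤ 0 := by
    intro t ht h
    have hr0 : r t = 0 := by rw [hr t ht]; exact max_eq_right h
    rcases (hrstar t).eq_or_lt with h0 | h0
    · exact hneg t ht (by rw [hr0, ← h0])
    · have := hsgn t ht
      rw [hr0] at this
      by_contra hc
      push Not at hc
      nlinarith [mul_pos hc h0]
  have hgpos : ∀ t, 1 ≤ t → D < rt t → 0 ≤ gs t := by
    intro t ht h
    have h1 : rt t ≤ r t := by rw [hr t ht]; exact le_max_left _ _
    have h2 : rstar t - r t < 0 := by linarith [hrstarD t]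
    have := hsgn t ht
    by_contra hc
    push Not at hc
    nlinarith [mul_pos_of_neg_of_neg hc h2]
  -- recursions of the unclipped statistics
  have hSrec : ∀ t, Sstar (t+1) = lam t * Sstar t - gs (t+1) := by
    intro t
    rw [hSstar, hSstar, Finset.sum_Icc_succ_top (by omega)]
    have : ∑ i ∈ Finset.Icc 1 t, (∏ j ∈ Finset.Icc i (t+1-1), lam j) * gs i
        = lam t * ∑ i ∈ Finset.Icc 1 t, (∏ j ∈ Finset.Icc i (t-1), lam j) * gs i := by
      rw [Finset.mul_sum]
      refine Finset.sum_congr rfl fun i hi => ?_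
      rw [Finset.mem_Icc] at hi
      obtain ⟨s, rfl⟩ : ∃ s, t = s + 1 := ⟨t - 1, by omega⟩
      simp only [Nat.add_sub_cancel]
      rw [Finset.prod_Icc_succ_top (by omega)]
      ring
    rw [this]
    simp
    ring
  have hVrec : ∀ t, Vstar (t+1) = (lam t)^2 * Vstar t + (gs (t+1))^2 := by
    intro t
    rw [hVstar, hVstar, Finset.sum_Icc_succ_top (by omega)]
    have : ∑ i ∈ Finset.Icc 1 t, (∏ j ∈ Finset.Icc i (t+1-1), (lam j)^2) * (gs i)^2
        = (lam t)^2 * ∑ i ∈ Finset.Icc 1 t, (∏ j ∈ Finset.Icc i (t-1), (lam j)^2) * (gs i)^2 := by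
      rw [Finset.mul_sum]
      refine Finset.sum_congr rfl fun i hi => ?_
      rw [Finset.mem_Icc] at hi
      obtain ⟨s, rfl⟩ : ∃ s, t = s + 1 := ⟨t - 1, by omega⟩
      simp only [Nat.add_sub_cancel]
      rw [Finset.prod_Icc_succ_top (by omega)]
      ring
    rw [this]
    simp
  have hinv : ∀ t, 0 ≤ Sc t ∧ 0 ≤ Vc t ∧ Vc t ≤ Vstar t ∧ |Sstar t - Sc t| ≤ Gs t ∧
      Sc t ≤ 2 * Real.sqrt (Vc t) * L + 14 * Gs t * L^2 := by
    intro t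
    induction t with
    | zero =>
      rw [hSc0, hVc0, hGs0, hSstar, hVstar]
      simp
    | succ t ih =>
      obtain ⟨hS, hV, hVV, hSS, hB⟩ := ih
      have hGt := hG t
      have hl := hlam t
      have c := hclip (t+1) (by omega)
      have eS := hScrec (t+1) (by omega)
      have eV := hVcrec (t+1) (by omega)
      have eG := hGsrec (t+1) (by omega)
      have ep := hrt (t+1) (by omega)
      have sn := hgneg (t+1) (by omega)
      have sp := hgpos (t+1) (by omega)
      have eSs := hSrec t
      have eVs := hVrec t
      simp only [Nat.add_sub_cancel] at c eS eV eG ep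
      generalize gs (t+1) = g at *
      generalize gclip (t+1) = gc at *
      have hM : 0 ≤ lam t * Gs t := by positivity
      generalize hMd : lam t * Gs t = M at *
      have hgcM : |gc| ≤ M := by
        rw [c, abs_le]
        exact ⟨le_max_left _ _, max_le (by linarith) (min_le_right _ _)⟩
      have hgc2 : gc^2 ≤ g^2 := by
        rw [sq_le_sq, c]
        rcases le_total g M with h | h
        · rw [min_eq_left h]
          rcases le_total (-M) g with h' | h'
          · rw [max_eq_right h']
          · rw [max_eq_left h', abs_neg, abs_of_nonneg hM, abs_of_nonpos (by linarith)]
            linarith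
        · rw [min_eq_right h, max_eq_right (by linarith), abs_of_nonneg hM,
            abs_of_nonneg (by linarith)]
          exact h
      have hdiff : |g - gc| ≤ Gs (t+1) - M := by
        rw [eG, c]
        rcases le_total g M with h | h
        · rw [min_eq_left h]
          rcases le_total (-M) g with h' | h'
          · rw [max_eq_right h', sub_self, abs_zero]
            linarith [le_max_left M |g|]
          · rw [max_eq_left h', abs_of_nonpos (by linarith)]
            linarith [le_max_right M |g|, neg_le_abs g]
        · rw [min_eq_right h, max_eq_right (by linarith), abs_of_nonneg (by linarith)]
          linarith [le_max_right M |g|, le_abs_self g]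
      have hMG : M ≤ Gs (t+1) := by rw [eG]; exact le_max_left _ _
      have hgcneg : g ≤ 0 → gc ≤ 0 := by
        intro h
        rw [c]
        exact max_le (by linarith) ((min_le_left _ _).trans h)
      have hgcpos : 0 ≤ g → 0 ≤ gc := by
        intro h
        rw [c]
        exact le_max_of_le_right (le_min h hM)
      have hgc := abs_le.1 hgcM
      have hlS : 0 ≤ lam t * Sc t := by positivity
      have hsq : lam t * Real.sqrt (Vc t) ≤ Real.sqrt (Vc (t+1)) := by
        apply Real.le_sqrt_of_sq_le
        rw [mul_pow, Real.sq_sqrt hV, eV]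
        nlinarith [sq_nonneg gc]
      have hL0 : 0 < L := by linarith
      have hsq' : lam t * Real.sqrt (Vc t) * L ≤ Real.sqrt (Vc (t+1)) * L := by gcongr
      have hMG' : M * L^2 ≤ Gs (t+1) * L^2 := by gcongr
      have hLB : lam t * Sc t ≤ 2 * Real.sqrt (Vc (t+1)) * L + 14 * Gs (t+1) * L^2 := by
        have := mul_le_mul_of_nonneg_left hB hl.le
        have e : lam t * (2 * Real.sqrt (Vc t) * L + 14 * Gs t * L^2)
          = 2 * (lam t * Real.sqrt (Vc t) * L) + 14 * (M * L^2) := by rw [← hMd]; ring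
        rw [e] at this
        linarith
      refine ⟨?_, ?_, ?_, ?_, ?_⟩
      · rw [eS]
        rcases hGt.eq_or_lt with h0 | h0
        · have : M = 0 := by rw [← hMd, ← h0, mul_zero]
          linarith
        · by_cases h : Sc t ≤ 2 * Gs t
          · have := pred_small eps (Sc t) (Vc t) (Gs t) heps h0 hS hV h
            rw [← ep.2 h0.ne'] at this
            linarith [hgcneg (sn this)]
          · push Not at h
            have := mul_lt_mul_of_pos_left h hl
            nlinarith
      · rw [eV]; positivity
      · rw [eV, eVs]
        have := mul_le_mul_of_nonneg_left hVV (sq_nonneg (lam t))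
        linarith
      · have e : Sstar (t+1) - Sc (t+1) = lam t * (Sstar t - Sc t) - (g - gc) := by
          rw [eS, eSs]; ring
        rw [e]
        have h1 := abs_sub (lam t * (Sstar t - Sc t)) (g - gc)
        have h2 : |lam t * (Sstar t - Sc t)| ≤ M := by
          rw [abs_mul, abs_of_pos hl, ← hMd]
          gcongr
        linarith
      · rw [eS]
        rcases hGt.eq_or_lt with h0 | h0
        · have : M = 0 := by rw [← hMd, ← h0, mul_zero]
          linarith
        · rcases lt_or_ge L
            (Sc t / (2 * Real.sqrt (Vc t + 2 * Gs t * Sc t + 16 * (Gs t)^2))) with h | h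
          · have := pred_large eps D (Sc t) (Vc t) (Gs t) L heps hD h0 hS hV hL h
            rw [← ep.2 h0.ne'] at this
            linarith [hgcpos (sp this)]
          · have h1 := quad_bound (Sc t) (Vc t) (Gs t) L hS hV h0 hL1 h
            have := mul_le_mul_of_nonneg_left h1 hl.le
            have e : lam t * (2 * Real.sqrt (Vc t) * L + 13 * Gs t * L^2)
              = 2 * (lam t * Real.sqrt (Vc t) * L) + 13 * (M * L^2) := by rw [← hMd]; ring
            rw [e] at this
            have hL2 : 1 ≤ L^2 := one_le_pow₀ hL1
            have : M ≤ M * L^2 := le_mul_of_one_le_right hM hL2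
            linarith
  intro T _
  obtain ⟨hS, hV, hVV, hSS, hB⟩ := hinv T
  have hL2 : 1 ≤ L^2 := one_le_pow₀ hL1
  have h1 : Gs T ≤ Gs T * L^2 := le_mul_of_one_le_right (hG T) hL2
  have h2 : Real.sqrt (Vc T) * L ≤ Real.sqrt (Vstar T) * L := by
    have := Real.sqrt_le_sqrt hVV
    have : 0 ≤ L := by linarith
    gcongr
  have h3 := abs_le.1 hSS
  rw [abs_le]
  have h4 : 0 ≤ Real.sqrt (Vc T) * L := by positivity
  constructor <;> nlinarith [hG T]
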